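/- arXiv:1802.03380 — 2 statements merged into one kernel-verified Lean document; each statement's English description precedes it below -/
import Mathlib

section
/- Let a > 0. The function K_a is smooth on ℝ³ ∖ {0}; for every x ≠ 0 its gradient is ∇K_a(x) = −x/|x|³ + (x/|x|³)(|x|/a + 1) e^{−|x|/a} and the gradient of its Laplacian is ∇(ΔK_a)(x) = (x/(a²|x|³))(|x|/a + 1) e^{−|x|/a}; consequently ∇K_a(x) − a² ∇(ΔK_a)(x) = −x/|x|³ for all x ≠ 0. -/
/-!
In dimension three the Yukawa potential `Y_κ(x) = e^{-κ|x|}/|x|` satisfies `ΔY_κ = κ² Y_κ` away from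
the origin, and `K_a = Y_0 - Y_{1/a}`. Hence `ΔK_a = -a⁻² Y_{1/a}`, so both gradients reduce to
`∇Y_κ = -(κ|x| + 1) e^{-κ|x|} x/|x|³`. In `∇K_a - a²∇(ΔK_a)` the contributions of `Y_{1/a}` cancel
and leave `∇Y_0`.
-/

open MeasureTheory Real

noncomputable section

/-- Three dimensional Euclidean space. -/
abbrev E3 := EuclideanSpace ℝ (Fin 3)

/-- The Laplacian of a function on `ℝ³`, as the sum of the second partial derivatives. -/
def lap (f : E3 → ℝ) (x : E3) : ℝ :=
  ∑ i : Fin 3, fderiv ℝ (fun y => fderiv ℝ f y (EuclideanSpace.single i 1)) x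
    (EuclideanSpace.single i 1)

/-- The Bopp–Podolsky kernel `K_a(x) = (1 - e^{-|x|/a})/|x|`. -/
def K (a : ℝ) (x : E3) : ℝ := (1 - Real.exp (-‖x‖ / a)) / ‖x‖

open scoped Gradient Laplacian Topology
open Module (finrank)

section Gradient

variable {E : Type*} [NormedAddCommGroup E] [InnerProductSpace ℝ E] [CompleteSpace E]
  {f g : E → ℝ} {f' g' x : E}

theorem hasGradientAt_sub (hf : HasGradientAt f f' x) (hg : HasGradientAt g g' x) :
    HasGradientAt (f - g) (f' - g') x := by
  simpa only [hasGradientAt_iff_hasFDerivAt, map_sub] using hf.hasFDerivAt.sub hg.hasFDerivAt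

theorem hasGradientAt_const_smul (c : ℝ) (hf : HasGradientAt f f' x) :
    HasGradientAt (c • f) (c • f') x := by
  simpa only [hasGradientAt_iff_hasFDerivAt, map_smul] using hf.hasFDerivAt.const_smul c

end Gradient

section Radial

variable {E : Type*} [NormedAddCommGroup E] [InnerProductSpace ℝ E] {x : E}

theorem hasFDerivAt_norm (hx : x ≠ 0) :
    HasFDerivAt (fun y : E => ‖y‖) (‖x‖⁻¹ • innerSL ℝ x) x := by
  have hsqrt := (hasStrictFDerivAt_norm_sq x).hasFDerivAt.sqrt (by positivity)
  simp only [Real.sqrt_sq (norm_nonneg _)] at hsqrt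
  refine hsqrt.congr_fderiv ?_
  module

theorem hasFDerivAt_comp_norm {φ : ℝ → ℝ} {φ' : ℝ} (hx : x ≠ 0) (hφ : HasDerivAt φ φ' ‖x‖) :
    HasFDerivAt (fun y : E => φ ‖y‖) ((φ' / ‖x‖) • innerSL ℝ x) x := by
  refine (hφ.comp_hasFDerivAt x (hasFDerivAt_norm hx)).congr_fderiv ?_
  rw [smul_smul, div_eq_mul_inv]

theorem hasGradientAt_comp_norm [CompleteSpace E] {φ : ℝ → ℝ} {φ' : ℝ} (hx : x ≠ 0)
    (hφ : HasDerivAt φ φ' ‖x‖) :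
    HasGradientAt (fun y : E => φ ‖y‖) ((φ' / ‖x‖) • x) x :=
  hasGradientAt_iff_hasFDerivAt.2 <|
    (hasFDerivAt_comp_norm hx hφ).congr_fderiv (map_smul (InnerProductSpace.toDual ℝ E) _ x).symm

variable {φ φ' : ℝ → ℝ} {φ'' : ℝ}

theorem fderiv_fderiv_comp_norm_apply (hx : x ≠ 0)
    (hφ : ∀ᶠ r in 𝓝 ‖x‖, HasDerivAt φ (φ' r) r) (hφ' : HasDerivAt φ' φ'' ‖x‖) (v w : E) :
    fderiv ℝ (fderiv ℝ fun y : E => φ ‖y‖) x v w =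
      φ' ‖x‖ / ‖x‖ * inner ℝ v w +
        (φ'' - φ' ‖x‖ / ‖x‖) / ‖x‖ ^ 2 * (inner ℝ x v * inner ℝ x w) := by
  have hr : ‖x‖ ≠ 0 := norm_ne_zero_iff.2 hx
  have hfderiv : (fderiv ℝ fun y : E => φ ‖y‖) =ᶠ[𝓝 x]
      fun y => (φ' ‖y‖ / ‖y‖) • (innerSL ℝ : E →L[ℝ] E →L[ℝ] ℝ) y := by
    filter_upwards [isOpen_ne.mem_nhds hx, continuous_norm.continuousAt.eventually hφ] with y hy hφy
    exact (hasFDerivAt_comp_norm hy hφy).fderiv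
  have hcoeff : HasDerivAt (fun r => φ' r / r) ((φ'' - φ' ‖x‖ / ‖x‖) / ‖x‖) ‖x‖ := by
    refine (hφ'.fun_div (hasDerivAt_id' _) hr).congr_deriv ?_
    field_simp
  have hinner (y z : E) : (innerSL ℝ : E →L[ℝ] E →L[ℝ] ℝ) y z = inner ℝ y z := rfl
  rw [hfderiv.fderiv_eq, ((hasFDerivAt_comp_norm hx hcoeff).fun_smul
    (innerSL ℝ : E →L[ℝ] E →L[ℝ] ℝ).hasFDerivAt).fderiv]
  simp only [add_apply, smul_apply, ContinuousLinearMap.smulRight_apply, hinner, smul_eq_mul]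
  ring

theorem laplacian_comp_norm [FiniteDimensional ℝ E] (hx : x ≠ 0)
    (hφ : ∀ᶠ r in 𝓝 ‖x‖, HasDerivAt φ (φ' r) r) (hφ' : HasDerivAt φ' φ'' ‖x‖) :
    Δ (fun y : E => φ ‖y‖) x = φ'' + (finrank ℝ E - 1) * (φ' ‖x‖ / ‖x‖) := by
  have hr : ‖x‖ ≠ 0 := norm_ne_zero_iff.2 hx
  let b := stdOrthonormalBasis ℝ E
  set ψ := φ' ‖x‖ / ‖x‖
  have hterm (i : Fin (finrank ℝ E)) :
      iteratedFDeriv ℝ 2 (fun y : E => φ ‖y‖) x ![b i, b i] =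
        ψ + (φ'' - ψ) / ‖x‖ ^ 2 * inner ℝ x (b i) ^ 2 := by
    rw [iteratedFDeriv_two_apply]
    simp [fderiv_fderiv_comp_norm_apply hx hφ hφ', ψ, sq]
  calc Δ (fun y : E => φ ‖y‖) x
      = ∑ i, (ψ + (φ'' - ψ) / ‖x‖ ^ 2 * inner ℝ x (b i) ^ 2) := by
        simp only [InnerProductSpace.laplacian_eq_iteratedFDeriv_orthonormalBasis _ b, hterm]
    _ = finrank ℝ E * ψ + (φ'' - ψ) / ‖x‖ ^ 2 * ‖x‖ ^ 2 := by
        rw [Finset.sum_add_distrib, ← Finset.mul_sum, b.sum_sq_inner_left]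
        simp
    _ = φ'' + (finrank ℝ E - 1) * ψ := by
        rw [div_mul_cancel₀ _ (pow_ne_zero 2 hr)]
        ring

end Radial

section Yukawa

variable {E : Type*} [NormedAddCommGroup E]

/-- The Yukawa potential `e^{-κ|x|}/|x|` with inverse range `κ`; `κ = 0` is the Newtonian potential
`1/|x|`. It takes the junk value `0` at the origin. -/
def yukawa (κ : ℝ) (x : E) : ℝ := Real.exp (-(κ * ‖x‖)) / ‖x‖

theorem hasDerivAt_yukawa_profile (κ : ℝ) {r : ℝ} (hr : r ≠ 0) :
    HasDerivAt (fun r => Real.exp (-(κ * r)) / r)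
      (-((κ * r + 1) * Real.exp (-(κ * r)) / r ^ 2)) r := by
  have hexp := ((hasDerivAt_id' r).const_mul κ).fun_neg.exp
  refine (hexp.fun_div (hasDerivAt_id' r) hr).congr_deriv ?_
  ring

theorem hasDerivAt_deriv_yukawa_profile (κ : ℝ) {r : ℝ} (hr : r ≠ 0) :
    HasDerivAt (fun r => -((κ * r + 1) * Real.exp (-(κ * r)) / r ^ 2))
      (((κ * r) ^ 2 + 2 * (κ * r) + 2) * Real.exp (-(κ * r)) / r ^ 3) r := by
  have hlin := (hasDerivAt_id' r).const_mul κ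
  refine (((hlin.add_const 1).fun_mul hlin.fun_neg.exp).fun_div (hasDerivAt_pow 2 r)
    (pow_ne_zero 2 hr)).fun_neg.congr_deriv ?_
  field_simp
  ring

variable [InnerProductSpace ℝ E] {x : E}

theorem contDiffAt_yukawa (κ : ℝ) (hx : x ≠ 0) {n : WithTop ℕ∞} : ContDiffAt ℝ n (yukawa κ) x :=
  have hnorm : ContDiffAt ℝ n (fun y : E => ‖y‖) x := contDiffAt_norm ℝ hx
  (contDiffAt_const.mul hnorm).neg.exp.div hnorm (norm_ne_zero_iff.2 hx)

theorem hasGradientAt_yukawa [CompleteSpace E] (κ : ℝ) (hx : x ≠ 0) :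
    HasGradientAt (yukawa κ)
      (-((κ * ‖x‖ + 1) * Real.exp (-(κ * ‖x‖)) / ‖x‖ ^ 3) • x) x := by
  have hr : ‖x‖ ≠ 0 := norm_ne_zero_iff.2 hx
  have hgrad := hasGradientAt_comp_norm hx (hasDerivAt_yukawa_profile κ hr)
  rwa [neg_div, div_div, ← pow_succ] at hgrad

theorem laplacian_yukawa [FiniteDimensional ℝ E] (hE : finrank ℝ E = 3) (κ : ℝ) (hx : x ≠ 0) :
    Δ (yukawa κ : E → ℝ) x = κ ^ 2 * yukawa κ x := by
  have hr : ‖x‖ ≠ 0 := norm_ne_zero_iff.2 hx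
  have hprofile := (eventually_ne_nhds hr).mono fun r => hasDerivAt_yukawa_profile κ (r := r)
  have hlap := laplacian_comp_norm hx hprofile (hasDerivAt_deriv_yukawa_profile κ hr)
  refine hlap.trans ?_
  rw [hE, yukawa]
  push_cast
  field_simp
  ring

end Yukawa

section Kernel

theorem lap_eq_laplacian {f : E3 → ℝ} {x : E3} (hf : DifferentiableAt ℝ (fderiv ℝ f) x) :
    lap f x = Δ f x := by
  simp [lap, InnerProductSpace.laplacian_eq_iteratedFDeriv_orthonormalBasis f
    (EuclideanSpace.basisFun (Fin 3) ℝ), iteratedFDeriv_two_apply,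
    fderiv_clm_apply hf (differentiableAt_const _)]

theorem K_eq_yukawa_sub_yukawa (a : ℝ) : K a = yukawa 0 - yukawa a⁻¹ := by
  ext x
  simp [K, yukawa, sub_div, neg_div, div_eq_inv_mul ‖x‖ a]

variable (a : ℝ) {x : E3}

theorem contDiffAt_K (hx : x ≠ 0) {n : WithTop ℕ∞} : ContDiffAt ℝ n (K a) x := by
  rw [K_eq_yukawa_sub_yukawa]
  exact (contDiffAt_yukawa 0 hx).sub (contDiffAt_yukawa a⁻¹ hx)

theorem lap_K (hx : x ≠ 0) : lap (K a) x = -(a⁻¹ ^ 2) * yukawa a⁻¹ x := by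
  have hfderiv : DifferentiableAt ℝ (fderiv ℝ (K a)) x :=
    ((contDiffAt_K a hx (n := 2)).fderiv_right (m := 1) le_rfl).differentiableAt one_ne_zero
  have hdim : finrank ℝ E3 = 3 := finrank_euclideanSpace_fin
  rw [lap_eq_laplacian hfderiv, K_eq_yukawa_sub_yukawa,
    (contDiffAt_yukawa 0 hx).laplacian_sub (contDiffAt_yukawa a⁻¹ hx),
    laplacian_yukawa hdim 0 hx, laplacian_yukawa hdim a⁻¹ hx]
  ring

theorem gradient_K (hx : x ≠ 0) :
    ∇ (K a) x =
      (-(‖x‖ ^ 3)⁻¹ + (‖x‖ ^ 3)⁻¹ * (‖x‖ / a + 1) * Real.exp (-‖x‖ / a)) • x := by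
  rw [K_eq_yukawa_sub_yukawa,
    (hasGradientAt_sub (hasGradientAt_yukawa 0 hx) (hasGradientAt_yukawa a⁻¹ hx)).gradient,
    ← sub_smul, neg_div a ‖x‖, div_eq_inv_mul ‖x‖ a]
  congr 1
  simp only [zero_mul, zero_add, neg_zero, Real.exp_zero, one_mul]
  ring

theorem gradient_lap_K (hx : x ≠ 0) :
    ∇ (lap (K a)) x =
      ((a ^ 2 * ‖x‖ ^ 3)⁻¹ * (‖x‖ / a + 1) * Real.exp (-‖x‖ / a)) • x := by
  have hlap : lap (K a) =ᶠ[𝓝 x] (-(a⁻¹ ^ 2)) • yukawa a⁻¹ :=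
    (eventually_ne_nhds hx).mono fun _ => lap_K a
  rw [hlap.gradient_eq, (hasGradientAt_const_smul _ (hasGradientAt_yukawa a⁻¹ hx)).gradient,
    smul_smul, neg_div a ‖x‖, div_eq_inv_mul ‖x‖ a]
  congr 1
  ring

end Kernel

/-- `K_a` is smooth away from the origin; its gradient is
`∇K_a(x) = -x/|x|³ + (x/|x|³)(|x|/a + 1)e^{-|x|/a}`, the gradient of its Laplacian is
`∇(ΔK_a)(x) = (x/(a²|x|³))(|x|/a + 1)e^{-|x|/a}`, and hence
`∇K_a(x) - a²∇(ΔK_a)(x) = -x/|x|³` for `x ≠ 0`. -/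
theorem K_gradient_formulas (a : ℝ) (ha : 0 < a) :
    ContDiffOn ℝ (⊤ : ℕ∞) (K a) {(0 : E3)}ᶜ ∧
    (∀ x : E3, x ≠ 0 → gradient (K a) x =
      (-(‖x‖ ^ 3)⁻¹ + (‖x‖ ^ 3)⁻¹ * (‖x‖ / a + 1) * Real.exp (-‖x‖ / a)) • x) ∧
    (∀ x : E3, x ≠ 0 → gradient (lap (K a)) x =
      ((a ^ 2 * ‖x‖ ^ 3)⁻¹ * (‖x‖ / a + 1) * Real.exp (-‖x‖ / a)) • x) ∧
    (∀ x : E3, x ≠ 0 →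
      gradient (K a) x - a ^ 2 • gradient (lap (K a)) x = (-(‖x‖ ^ 3)⁻¹) • x) := by
  refine ⟨fun x hx => (contDiffAt_K a hx).contDiffWithinAt, fun x => gradient_K a,
    fun x => gradient_lap_K a, fun x hx => ?_⟩
  rw [gradient_K a hx, gradient_lap_K a hx, smul_smul, ← sub_smul]
  congr 1
  field_simp
  ring
end
end

section
/- Let a > 0 and set L_a(z) = e^{−|z|/a}/(a²|z|) for z ∈ ℝ³ ∖ {0} (so that L_a = −ΔK_a on ℝ³ ∖ {0}). Then for every x ∈ ℝ³ the convolution satisfies ∫_{ℝ³} L_a(x − y) L_a(y) dy = (2π/a³) e^{−|x|/a}. -/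
open MeasureTheory Real

noncomputable section

/-- The function `L_a(z) = e^{-|z|/a}/(a²|z|)`, which equals `-ΔK_a` away from the origin. -/
def L (a : ℝ) (z : E3) : ℝ := Real.exp (-‖z‖ / a) / (a ^ 2 * ‖z‖)

/-!
Up to the factor `4π`, the function `L_a` is the density of the heat flow on `ℝ³` observed at an
exponential random time of rate `a⁻²`. Mixtures of heat kernels `p_t` inherit the semigroup law
`p_s ⋆ p_t = p_{s+t}`: convolving two of them convolves the laws of their random times. The sum of
two independent exponential times has the gamma law of shape `2`, so `L_a ⋆ L_a` is `(4π)²` times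
the heat flow observed at a gamma time. In dimension `d`, the densities at gamma times of shape
`(d - 1) / 2` and `(d + 1) / 2` are elementary, because `∫₀^∞ exp (-(p v)² - (q / v)²) dv` is a
Gaussian integral in the variable `p v - q / v`; for `d = 3` these are the shapes `1` and `2`.
-/

open ProbabilityTheory Set
open scoped ENNReal

section HeatKernel

variable {V : Type*} [NormedAddCommGroup V] [InnerProductSpace ℝ V]

/-- The heat kernel `(4πt)^{-d/2} e^{-|x|²/(4t)}` of a `d`-dimensional Euclidean space, i.e. the
fundamental solution of `∂ₜ - Δ`. Only the values at times `t > 0` are meaningful. -/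
def heatKernel (t : ℝ) (x : V) : ℝ :=
  (4 * π * t) ^ (-(Module.finrank ℝ V / 2 : ℝ)) * exp (-(‖x‖ ^ 2 / (4 * t)))

lemma heatKernel_nonneg {t : ℝ} (ht : 0 ≤ t) (x : V) : 0 ≤ heatKernel t x := by
  unfold heatKernel
  positivity

lemma heatKernel_mul_heatKernel_sub {s t : ℝ} (hs : 0 < s) (ht : 0 < t) (x y : V) :
    heatKernel s y * heatKernel t (x - y) =
      heatKernel (s + t) x * heatKernel (s * t / (s + t)) (y - (s / (s + t)) • x) := by
  have square_completed : ‖y‖ ^ 2 / (4 * s) + ‖x - y‖ ^ 2 / (4 * t) =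
      ‖x‖ ^ 2 / (4 * (s + t)) +
        ‖y - (s / (s + t)) • x‖ ^ 2 / (4 * (s * t / (s + t))) := by
    rw [norm_sub_sq_real, norm_sub_sq_real, inner_smul_right, real_inner_comm, norm_smul,
      Real.norm_of_nonneg (by positivity)]
    field_simp
    ring
  have times_mul : 4 * π * s * (4 * π * t) = 4 * π * (s + t) * (4 * π * (s * t / (s + t))) := by
    field_simp
  unfold heatKernel
  rw [mul_mul_mul_comm, ← exp_add, ← mul_rpow (by positivity) (by positivity), ← neg_add,
    square_completed, times_mul, mul_rpow (by positivity) (by positivity), neg_add, exp_add,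
    mul_mul_mul_comm]

variable [MeasurableSpace V] [BorelSpace V]

@[fun_prop]
lemma measurable_heatKernel : Measurable fun p : ℝ × V ↦ heatKernel p.1 p.2 := by
  unfold heatKernel
  fun_prop

/-- The mixture `∫ p_t(x) dμ(t)` of the heat kernels `p_t` over a random time `t` with law `μ`,
known as Bochner subordination. -/
def heatMixture (μ : Measure ℝ) (x : V) : ℝ≥0∞ :=
  ∫⁻ t, ENNReal.ofReal (heatKernel t x) ∂μ

@[fun_prop]
lemma measurable_heatMixture (μ : Measure ℝ) [SFinite μ] :
    Measurable (heatMixture μ : V → ℝ≥0∞) := by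
  unfold heatMixture
  fun_prop

variable [FiniteDimensional ℝ V]

lemma lintegral_heatKernel {t : ℝ} (ht : 0 < t) :
    ∫⁻ x : V, ENNReal.ofReal (heatKernel t x) = 1 := by
  have gaussian : ∫ x : V, exp (-(‖x‖ ^ 2 / (4 * t))) =
      (4 * π * t) ^ (Module.finrank ℝ V / 2 : ℝ) := by
    have := GaussianFourier.integral_rexp_neg_mul_sq_norm (V := V) (b := 1 / (4 * t))
      (by positivity)
    rw [div_div_eq_mul_div, div_one, mul_left_comm, ← mul_assoc] at this
    simpa only [neg_mul, one_div_mul_eq_div] using this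
  have integral_eq_one : ∫ x : V, heatKernel t x = 1 := by
    simp only [heatKernel]
    rw [integral_const_mul, gaussian, ← rpow_add (by positivity), neg_add_cancel, rpow_zero]
  rw [← ofReal_integral_eq_lintegral_ofReal, integral_eq_one, ENNReal.ofReal_one]
  · exact .of_integral_ne_zero (by simp [integral_eq_one])
  · exact .of_forall (heatKernel_nonneg ht.le)

lemma lintegral_heatKernel_mul_heatKernel_sub {s t : ℝ} (hs : 0 < s) (ht : 0 < t) (x : V) :
    ∫⁻ y, ENNReal.ofReal (heatKernel s y) * ENNReal.ofReal (heatKernel t (x - y)) =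
      ENNReal.ofReal (heatKernel (s + t) x) := by
  have hst : 0 < s * t / (s + t) := by positivity
  simp_rw [← ENNReal.ofReal_mul (heatKernel_nonneg hs.le _),
    heatKernel_mul_heatKernel_sub hs ht x,
    ENNReal.ofReal_mul (heatKernel_nonneg (add_pos hs ht).le x)]
  rw [lintegral_const_mul _ (by fun_prop),
    lintegral_sub_right_eq_self fun y : V ↦ ENNReal.ofReal (heatKernel (s * t / (s + t)) y),
    lintegral_heatKernel hst, mul_one]

lemma heatMixture_lconvolution_heatMixture {μ ν : Measure ℝ} [SFinite μ] [SFinite ν]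
    (hμ : ∀ᵐ t ∂μ, 0 < t) (hν : ∀ᵐ t ∂ν, 0 < t) :
    heatMixture μ ⋆ₗ heatMixture ν = (heatMixture (μ ∗ ν) : V → ℝ≥0∞) := by
  ext x
  have times_pos : ∀ᵐ p ∂μ.prod ν, 0 < p.1 ∧ 0 < p.2 :=
    (Measure.quasiMeasurePreserving_fst.ae hμ).and (Measure.quasiMeasurePreserving_snd.ae hν)
  calc ∫⁻ y, heatMixture μ y * heatMixture ν (-y + x)
    _ = ∫⁻ y, ∫⁻ p, ENNReal.ofReal (heatKernel p.1 y) *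
          ENNReal.ofReal (heatKernel p.2 (x - y)) ∂μ.prod ν := by
        refine lintegral_congr fun y ↦ ?_
        rw [neg_add_eq_sub]
        exact (lintegral_prod_mul (by fun_prop) (by fun_prop)).symm
    _ = ∫⁻ p, (∫⁻ y, ENNReal.ofReal (heatKernel p.1 y) *
          ENNReal.ofReal (heatKernel p.2 (x - y))) ∂μ.prod ν :=
        lintegral_lintegral_swap (by unfold Function.uncurry; fun_prop)
    _ = ∫⁻ p, ENNReal.ofReal (heatKernel (p.1 + p.2) x) ∂μ.prod ν := by
        refine lintegral_congr_ae ?_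
        filter_upwards [times_pos] with p hp
        exact lintegral_heatKernel_mul_heatKernel_sub hp.1 hp.2 x
    _ = heatMixture (μ ∗ ν) x :=
        by
        rw [heatMixture, Measure.lintegral_conv (by fun_prop), lintegral_prod _ (by fun_prop)]

end HeatKernel

section GammaConvolution

@[fun_prop]
lemma measurable_gammaPDF (α r : ℝ) : Measurable (gammaPDF α r) :=
  (measurable_gammaPDFReal α r).ennreal_ofReal

lemma ae_pos_gammaMeasure (α r : ℝ) : ∀ᵐ t ∂gammaMeasure α r, 0 < t := by
  rw [gammaMeasure, ae_withDensity_iff (by fun_prop)]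
  filter_upwards [Measure.ae_ne volume 0] with t ht hpdf
  exact lt_of_le_of_ne (not_lt.1 fun hneg ↦ hpdf (gammaPDF_of_neg hneg)) ht.symm

/-- If `Y`, `Z` are independent gamma variables of the same rate, then `Y / (Y + Z)` is a beta
variable independent of `Y + Z`; this is the corresponding factorization of the joint density. -/
lemma gammaPDF_mul_gammaPDF_sub {α β r : ℝ} (hα : 0 < α) (hβ : 0 < β) (hr : 0 < r) {x y : ℝ}
    (hx : 0 < x) (hy : y ≠ 0) (hyx : y ≠ x) :
    gammaPDF α r y * gammaPDF β r (x - y) =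
      gammaPDF (α + β) r x * (ENNReal.ofReal |x⁻¹| * betaPDF α β (x⁻¹ * y)) := by
  rw [abs_of_pos (inv_pos.2 hx)]
  rcases hy.lt_or_gt with hy | hy
  · rw [gammaPDF_of_neg hy, zero_mul,
      betaPDF_eq_zero_of_nonpos (mul_nonpos_of_nonneg_of_nonpos (by positivity) hy.le), mul_zero,
      mul_zero]
  rcases hyx.lt_or_gt with hyx | hyx
  · have hxy : 0 < x - y := sub_pos.2 hyx
    have : 0 < Gamma α := Gamma_pos_of_pos hα
    have : 0 < Gamma β := Gamma_pos_of_pos hβ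
    have : 0 < Gamma (α + β) := Gamma_pos_of_pos (add_pos hα hβ)
    have one_sub : 1 - x⁻¹ * y = x⁻¹ * (x - y) := by field_simp
    rw [gammaPDF_of_nonneg hy.le, gammaPDF_of_nonneg hxy.le, gammaPDF_of_nonneg hx.le,
      betaPDF_of_pos_lt_one (by positivity) (by rwa [inv_mul_lt_one₀ hx]), one_sub,
      ← ENNReal.ofReal_mul (by positivity), ← ENNReal.ofReal_mul (by positivity),
      ← ENNReal.ofReal_mul (by positivity), mul_rpow (by positivity) hy.le,
      mul_rpow (by positivity) hxy.le, inv_rpow hx.le, inv_rpow hx.le, rpow_add hr,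
      show α + β - 1 = (α - 1) + (β - 1) + 1 by ring, rpow_add hx, rpow_add hx, rpow_one,
      show -(r * x) = -(r * y) + -(r * (x - y)) by ring, exp_add, beta]
    congr 1
    field_simp
  · rw [gammaPDF_of_neg (sub_neg.2 hyx), mul_zero,
      betaPDF_eq_zero_of_one_le ((one_le_inv_mul₀ hx).2 hyx.le), mul_zero, mul_zero]

lemma lintegral_comp_mul_left {c : ℝ} (hc : c ≠ 0) {f : ℝ → ℝ≥0∞} (hf : Measurable f) :
    ∫⁻ y, ENNReal.ofReal |c| * f (c * y) = ∫⁻ y, f y := by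
  rw [lintegral_const_mul _ (by fun_prop), ← lintegral_map hf (by fun_prop), ← smul_eq_mul,
    ← lintegral_smul_measure, Real.smul_map_volume_mul_left hc]

lemma gammaMeasure_conv_gammaMeasure {α β r : ℝ} (hα : 0 < α) (hβ : 0 < β) (hr : 0 < r) :
    gammaMeasure α r ∗ gammaMeasure β r = gammaMeasure (α + β) r := by
  have measurable_beta : Measurable (betaPDF α β) := (measurable_betaPDFReal α β).ennreal_ofReal
  simp only [gammaMeasure]
  rw [conv_withDensity_eq_lconvolution (by fun_prop) (by fun_prop)]
  refine withDensity_congr_ae ?_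
  filter_upwards [Measure.ae_ne volume 0] with x hx
  rw [lconvolution_def]
  rcases hx.lt_or_gt with hx | hx
  · have (y : ℝ) : gammaPDF α r y * gammaPDF β r (-y + x) = 0 := by
      rcases lt_or_ge y 0 with hy | hy
      · rw [gammaPDF_of_neg hy, zero_mul]
      · rw [gammaPDF_of_neg (x := -y + x) (by linarith), mul_zero]
    simp only [this, lintegral_zero, gammaPDF_of_neg hx]
  · calc ∫⁻ y, gammaPDF α r y * gammaPDF β r (-y + x)
      _ = ∫⁻ y, gammaPDF (α + β) r x * (ENNReal.ofReal |x⁻¹| * betaPDF α β (x⁻¹ * y)) := by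
          refine lintegral_congr_ae ?_
          filter_upwards [Measure.ae_ne volume 0, Measure.ae_ne volume x] with y hy hyx
          rw [neg_add_eq_sub, gammaPDF_mul_gammaPDF_sub hα hβ hr hx hy hyx]
      _ = gammaPDF (α + β) r x := by
          rw [lintegral_const_mul _ (by fun_prop),
            lintegral_comp_mul_left (inv_ne_zero hx.ne') measurable_beta,
            lintegral_betaPDF_eq_one hα hβ, mul_one]

end GammaConvolution

section CauchySchlomilch

lemma image_rpow_Ioi_zero {p : ℝ} (hp : p ≠ 0) : (fun x : ℝ ↦ x ^ p) '' Ioi 0 = Ioi 0 := by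
  refine Subset.antisymm (image_subset_iff.2 fun x hx ↦ rpow_pos_of_pos hx p) fun y hy ↦ ?_
  exact ⟨y ^ p⁻¹, rpow_pos_of_pos hy p⁻¹, rpow_inv_rpow (le_of_lt hy) hp⟩

lemma lintegral_comp_rpow_Ioi (f : ℝ → ℝ≥0∞) {p : ℝ} (hp : p ≠ 0) :
    ∫⁻ x in Ioi 0, ENNReal.ofReal (|p| * x ^ (p - 1)) * f (x ^ p) = ∫⁻ y in Ioi 0, f y := by
  have injOn : InjOn (fun x : ℝ ↦ x ^ p) (Ioi 0) :=
    (rpow_left_injOn hp).mono Ioi_subset_Ici_self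
  have change_of_variables := lintegral_image_eq_lintegral_abs_deriv_mul measurableSet_Ioi
    (fun x hx ↦ (hasDerivAt_rpow_const (Or.inl (ne_of_gt hx))).hasDerivWithinAt) injOn f
  rw [image_rpow_Ioi_zero hp] at change_of_variables
  rw [change_of_variables]
  refine setLIntegral_congr_fun measurableSet_Ioi fun x hx ↦ ?_
  rw [abs_mul, abs_of_pos (rpow_pos_of_pos hx (p - 1))]

lemma image_mul_sub_div_Ioi_zero {p q : ℝ} (hp : 0 < p) (hq : 0 < q) :
    (fun v ↦ p * v - q / v) '' Ioi 0 = univ := by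
  refine eq_univ_of_forall fun w ↦ ?_
  set s := √(w ^ 2 + 4 * p * q)
  have s_sq : s ^ 2 = w ^ 2 + 4 * p * q := sq_sqrt (by positivity)
  have abs_lt : |w| < s := by
    rw [← sqrt_sq_eq_abs]
    exact sqrt_lt_sqrt (sq_nonneg w) (by linarith [mul_pos hp hq])
  have root_pos : 0 < w + s := by linarith [neg_abs_le w]
  refine ⟨(w + s) / (2 * p), mem_Ioi.2 (by positivity), ?_⟩
  field_simp
  linear_combination s_sq

lemma lintegral_add_div_sq_mul_comp_mul_sub_div (f : ℝ → ℝ≥0∞) {p q : ℝ} (hp : 0 < p)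
    (hq : 0 < q) :
    ∫⁻ v in Ioi 0, ENNReal.ofReal (p + q / v ^ 2) * f (p * v - q / v) = ∫⁻ w, f w := by
  have hasDerivAt (v : ℝ) (hv : v ∈ Ioi 0) :
      HasDerivAt (fun v ↦ p * v - q / v) (p + q / v ^ 2) v := by
    convert! ((hasDerivAt_id v).const_mul p).sub
      ((hasDerivAt_inv (ne_of_gt hv)).const_mul q) using 1
    ring
  have monotoneOn : MonotoneOn (fun v ↦ p * v - q / v) (Ioi 0) := by
    intro u (hu : 0 < u) v _ huv
    dsimp only
    gcongr
  have change_of_variables := lintegral_image_eq_lintegral_deriv_mul_of_monotoneOn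
    measurableSet_Ioi (fun v hv ↦ (hasDerivAt v hv).hasDerivWithinAt) monotoneOn f
  rwa [image_mul_sub_div_Ioi_zero hp hq, setLIntegral_univ, eq_comm] at change_of_variables

/-- The substitution `v ↦ q / (p v)` changes the sign of `p v - q / v`. -/
lemma lintegral_div_sq_mul_comp_mul_sub_div {f : ℝ → ℝ≥0∞} (f_even : ∀ w, f (-w) = f w)
    {p q : ℝ} (hp : 0 < p) (hq : 0 < q) :
    ∫⁻ v in Ioi 0, ENNReal.ofReal (q / v ^ 2) * f (p * v - q / v) =
      ∫⁻ v in Ioi 0, ENNReal.ofReal p * f (p * v - q / v) := by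
  have hasDerivAt (v : ℝ) (hv : v ∈ Ioi 0) :
      HasDerivAt (fun v ↦ q / p / v) (-(q / p / v ^ 2)) v := by
    convert! (hasDerivAt_inv (ne_of_gt hv)).const_mul (q / p) using 1
    ring
  have antitoneOn : AntitoneOn (fun v ↦ q / p / v) (Ioi 0) := by
    intro u (hu : 0 < u) v _ huv
    dsimp only
    gcongr
  have image : (fun v ↦ q / p / v) '' Ioi 0 = Ioi 0 := by
    have maps_pos (v : ℝ) (hv : 0 < v) : 0 < q / p / v := by positivity
    refine Subset.antisymm (image_subset_iff.2 maps_pos) fun v hv ↦ ⟨q / p / v, maps_pos v hv, ?_⟩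
    exact div_div_cancel₀ (by positivity)
  have change_of_variables := lintegral_image_eq_lintegral_deriv_mul_of_antitoneOn
    measurableSet_Ioi (fun v hv ↦ (hasDerivAt v hv).hasDerivWithinAt) antitoneOn
    fun v ↦ ENNReal.ofReal p * f (p * v - q / v)
  rw [image] at change_of_variables
  rw [change_of_variables]
  refine setLIntegral_congr_fun measurableSet_Ioi fun v (hv : 0 < v) ↦ ?_
  have reflected : p * (q / p / v) - q / (q / p / v) = -(p * v - q / v) := by
    field_simp
    ring
  rw [reflected, f_even, ← mul_assoc, ← ENNReal.ofReal_mul (by rw [neg_neg]; positivity)]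
  congr 2
  field_simp

/-- The Cauchy–Schlömilch transformation. -/
lemma lintegral_comp_mul_sub_div {f : ℝ → ℝ≥0∞} (hf : Measurable f)
    (f_even : ∀ w, f (-w) = f w) {p q : ℝ} (hp : 0 < p) (hq : 0 < q) :
    ENNReal.ofReal (2 * p) * ∫⁻ v in Ioi 0, f (p * v - q / v) = ∫⁻ w, f w := by
  calc ENNReal.ofReal (2 * p) * ∫⁻ v in Ioi 0, f (p * v - q / v)
    _ = (∫⁻ v in Ioi 0, ENNReal.ofReal p * f (p * v - q / v)) +
          ∫⁻ v in Ioi 0, ENNReal.ofReal p * f (p * v - q / v) := by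
        rw [lintegral_const_mul _ (by fun_prop), two_mul, ENNReal.ofReal_add hp.le hp.le, add_mul]
    _ = (∫⁻ v in Ioi 0, ENNReal.ofReal p * f (p * v - q / v)) +
          ∫⁻ v in Ioi 0, ENNReal.ofReal (q / v ^ 2) * f (p * v - q / v) := by
        rw [lintegral_div_sq_mul_comp_mul_sub_div f_even hp hq]
    _ = ∫⁻ v in Ioi 0, ENNReal.ofReal (p + q / v ^ 2) * f (p * v - q / v) := by
        rw [← lintegral_add_left (by fun_prop)]
        refine lintegral_congr fun v ↦ ?_
        rw [← add_mul, ENNReal.ofReal_add hp.le (by positivity)]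
    _ = ∫⁻ w, f w := lintegral_add_div_sq_mul_comp_mul_sub_div f hp hq

lemma lintegral_exp_neg_mul_sq_sub_div_sq {p q : ℝ} (hp : 0 < p) (hq : 0 ≤ q) :
    ∫⁻ v in Ioi 0, ENNReal.ofReal (exp (-(p * v) ^ 2 - (q / v) ^ 2)) =
      ENNReal.ofReal (√π / (2 * p) * exp (-(2 * p * q))) := by
  rcases hq.eq_or_lt with rfl | hq
  · have gaussian := integral_gaussian_Ioi (p ^ 2)
    rw [sqrt_div pi_nonneg, sqrt_sq hp.le, div_div, mul_comm p] at gaussian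
    rw [mul_zero, neg_zero, exp_zero, mul_one, ← gaussian, ofReal_integral_eq_lintegral_ofReal
      (integrable_exp_neg_mul_sq (by positivity)).integrableOn (.of_forall fun _ ↦ exp_nonneg _)]
    simp only [zero_div, mul_pow, neg_mul, ne_eq, OfNat.ofNat_ne_zero, not_false_eq_true,
      zero_pow, sub_zero]
  · have gaussian : ∫⁻ w : ℝ, ENNReal.ofReal (exp (-w ^ 2)) = ENNReal.ofReal √π := by
      have integral_eq := integral_gaussian 1
      have integrable := integrable_exp_neg_mul_sq one_pos
      simp only [neg_one_mul, div_one] at integral_eq integrable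
      rw [← integral_eq,
        ofReal_integral_eq_lintegral_ofReal integrable (.of_forall fun _ ↦ exp_nonneg _)]
    have square_completed {v : ℝ} (hv : 0 < v) :
        ENNReal.ofReal (exp (-(p * v) ^ 2 - (q / v) ^ 2)) =
          ENNReal.ofReal (exp (-(2 * p * q))) *
            ENNReal.ofReal (exp (-(p * v - q / v) ^ 2)) := by
      rw [← ENNReal.ofReal_mul (exp_nonneg _), ← exp_add]
      congr 2
      field_simp
      ring
    have transformed := lintegral_comp_mul_sub_div
      (f := fun w ↦ ENNReal.ofReal (exp (-w ^ 2))) (by fun_prop) (by simp) hp hq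
    rw [gaussian] at transformed
    rw [setLIntegral_congr_fun measurableSet_Ioi fun _ ↦ square_completed,
      lintegral_const_mul _ (by fun_prop), mul_comm, ENNReal.ofReal_mul (by positivity)]
    congr 1
    rw [ENNReal.ofReal_div_of_pos (by positivity), ← transformed, mul_comm,
      ENNReal.mul_div_cancel_right (by positivity) ENNReal.ofReal_ne_top]

lemma lintegral_rpow_neg_half_mul_exp {k b : ℝ} (hk : 0 < k) (hb : 0 ≤ b) :
    ∫⁻ t in Ioi 0, ENNReal.ofReal (t ^ (-1 / 2 : ℝ) * exp (-(k ^ 2 * t) - b ^ 2 / t)) =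
      ENNReal.ofReal (√π / k * exp (-(2 * k * b))) := by
  rw [← lintegral_comp_rpow_Ioi _ two_ne_zero]
  have integrand {v : ℝ} (hv : 0 < v) :
      ENNReal.ofReal (|2| * v ^ (2 - 1 : ℝ)) * ENNReal.ofReal
          ((v ^ (2 : ℝ)) ^ (-1 / 2 : ℝ) * exp (-(k ^ 2 * v ^ (2 : ℝ)) - b ^ 2 / v ^ (2 : ℝ))) =
        ENNReal.ofReal 2 * ENNReal.ofReal (exp (-(k * v) ^ 2 - (b / v) ^ 2)) := by
    rw [← ENNReal.ofReal_mul (by positivity), ← ENNReal.ofReal_mul (by positivity), abs_two,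
      ← mul_assoc, mul_assoc 2, ← rpow_mul hv.le, ← rpow_add hv, rpow_two, mul_pow, div_pow]
    norm_num
  rw [setLIntegral_congr_fun measurableSet_Ioi fun _ ↦ integrand,
    lintegral_const_mul _ (by fun_prop), lintegral_exp_neg_mul_sq_sub_div_sq hk hb,
    ← ENNReal.ofReal_mul two_pos.le]
  congr 1
  field_simp

lemma lintegral_rpow_neg_three_halves_mul_exp {k b : ℝ} (hk : 0 ≤ k) (hb : 0 < b) :
    ∫⁻ t in Ioi 0, ENNReal.ofReal (t ^ (-3 / 2 : ℝ) * exp (-(k ^ 2 * t) - b ^ 2 / t)) =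
      ENNReal.ofReal (√π / b * exp (-(2 * k * b))) := by
  rw [← lintegral_comp_rpow_Ioi _ (neg_ne_zero.2 two_ne_zero)]
  have integrand {v : ℝ} (hv : 0 < v) :
      ENNReal.ofReal (|-2| * v ^ (-2 - 1 : ℝ)) * ENNReal.ofReal
          ((v ^ (-2 : ℝ)) ^ (-3 / 2 : ℝ) * exp (-(k ^ 2 * v ^ (-2 : ℝ)) - b ^ 2 / v ^ (-2 : ℝ))) =
        ENNReal.ofReal 2 * ENNReal.ofReal (exp (-(b * v) ^ 2 - (k / v) ^ 2)) := by
    rw [← ENNReal.ofReal_mul (by positivity), ← ENNReal.ofReal_mul (by positivity), abs_neg,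
      abs_two, ← mul_assoc, mul_assoc 2, ← rpow_mul hv.le, ← rpow_add hv, rpow_neg hv.le,
      rpow_two, mul_pow, div_pow, div_inv_eq_mul, ← div_eq_mul_inv,
      neg_sub_comm (k ^ 2 / v ^ 2)]
    norm_num
  rw [setLIntegral_congr_fun measurableSet_Ioi fun _ ↦ integrand,
    lintegral_const_mul _ (by fun_prop), lintegral_exp_neg_mul_sq_sub_div_sq hb hk,
    ← ENNReal.ofReal_mul two_pos.le]
  congr 1
  field_simp

end CauchySchlomilch

section GammaMixture

open Module (finrank)

variable {V : Type*} [NormedAddCommGroup V] [InnerProductSpace ℝ V]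
  [MeasurableSpace V] [BorelSpace V]

lemma heatMixture_gammaMeasure {α r : ℝ} (hα : 0 < α) (hr : 0 < r) (x : V) :
    heatMixture (gammaMeasure α r) x =
      ENNReal.ofReal (r ^ α / Gamma α * (4 * π) ^ (-(finrank ℝ V / 2 : ℝ))) *
        ∫⁻ t in Ioi 0, ENNReal.ofReal
          (t ^ (α - 1 - finrank ℝ V / 2 : ℝ) * exp (-(r * t) - (‖x‖ / 2) ^ 2 / t)) := by
  have : 0 < Gamma α := Gamma_pos_of_pos hα
  have restrict_Ioi : (gammaMeasure α r).restrict (Ioi 0) = gammaMeasure α r :=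
    Measure.restrict_eq_self_of_ae_mem (ae_pos_gammaMeasure α r)
  have integrand {t : ℝ} (ht : 0 < t) :
      gammaPDF α r t * ENNReal.ofReal (heatKernel t x) =
        ENNReal.ofReal (r ^ α / Gamma α * (4 * π) ^ (-(finrank ℝ V / 2 : ℝ))) *
          ENNReal.ofReal
            (t ^ (α - 1 - finrank ℝ V / 2 : ℝ) * exp (-(r * t) - (‖x‖ / 2) ^ 2 / t)) := by
    have exponent : -(r * t) - (‖x‖ / 2) ^ 2 / t = -(r * t) + -(‖x‖ ^ 2 / (4 * t)) := by
      field_simp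
      ring
    rw [gammaPDF_of_nonneg ht.le, ← ENNReal.ofReal_mul (by positivity),
      ← ENNReal.ofReal_mul (by positivity), heatKernel, mul_rpow (by positivity) ht.le, exponent,
      exp_add, sub_eq_add_neg (α - 1), rpow_add ht]
    congr 1
    ring
  rw [heatMixture, ← restrict_Ioi, gammaMeasure, restrict_withDensity measurableSet_Ioi,
    lintegral_withDensity_eq_lintegral_mul _ (by fun_prop) (by fun_prop),
    ← lintegral_const_mul _ (by fun_prop)]
  exact setLIntegral_congr_fun measurableSet_Ioi fun _ ↦ integrand

lemma heatMixture_gammaMeasure_finrank_add_one_div_two {k : ℝ} (hk : 0 < k) (x : V) :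
    heatMixture (gammaMeasure ((finrank ℝ V + 1) / 2) (k ^ 2)) x =
      ENNReal.ofReal (k ^ finrank ℝ V * √π /
        (Gamma ((finrank ℝ V + 1) / 2) * (4 * π) ^ (finrank ℝ V / 2 : ℝ)) *
          exp (-(k * ‖x‖))) := by
  have : 0 < Gamma ((finrank ℝ V + 1) / 2) := Gamma_pos_of_pos (by positivity)
  have exponent : ((finrank ℝ V + 1) / 2 - 1 - finrank ℝ V / 2 : ℝ) = -1 / 2 := by ring
  have rate_rpow : (k ^ 2) ^ ((finrank ℝ V + 1) / 2 : ℝ) = k ^ finrank ℝ V * k := by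
    rw [← rpow_two, ← rpow_mul hk.le, mul_div_cancel₀ _ two_ne_zero, rpow_add_one hk.ne',
      rpow_natCast]
  rw [heatMixture_gammaMeasure (by positivity) (by positivity), exponent,
    lintegral_rpow_neg_half_mul_exp hk (by positivity), ← ENNReal.ofReal_mul (by positivity),
    rate_rpow, rpow_neg (by positivity)]
  congr 1
  field_simp

lemma heatMixture_gammaMeasure_finrank_sub_one_div_two (hd : 1 < finrank ℝ V) {k : ℝ}
    (hk : 0 < k) {x : V} (hx : x ≠ 0) :
    heatMixture (gammaMeasure ((finrank ℝ V - 1) / 2) (k ^ 2)) x =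
      ENNReal.ofReal (2 * k ^ (finrank ℝ V - 1 : ℝ) * √π /
        (Gamma ((finrank ℝ V - 1) / 2) * (4 * π) ^ (finrank ℝ V / 2 : ℝ)) *
          (exp (-(k * ‖x‖)) / ‖x‖)) := by
  have shape_pos : 0 < ((finrank ℝ V - 1) / 2 : ℝ) := half_pos (sub_pos.2 (mod_cast hd))
  have : 0 < Gamma ((finrank ℝ V - 1) / 2) := Gamma_pos_of_pos shape_pos
  have : 0 < ‖x‖ := norm_pos_iff.2 hx
  have exponent : ((finrank ℝ V - 1) / 2 - 1 - finrank ℝ V / 2 : ℝ) = -3 / 2 := by ring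
  have rate_rpow : (k ^ 2) ^ ((finrank ℝ V - 1) / 2 : ℝ) = k ^ (finrank ℝ V - 1 : ℝ) := by
    rw [← rpow_two, ← rpow_mul hk.le, mul_div_cancel₀ _ two_ne_zero]
  rw [heatMixture_gammaMeasure shape_pos (by positivity), exponent,
    lintegral_rpow_neg_three_halves_mul_exp hk.le (by positivity),
    ← ENNReal.ofReal_mul (by positivity), rate_rpow, rpow_neg (by positivity)]
  congr 1
  field_simp

end GammaMixture

section ThreeDimensional

lemma four_pi_rpow_three_halves : (4 * π) ^ (3 / 2 : ℝ) = 8 * π * √π := by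
  rw [show (3 / 2 : ℝ) = 1 + 1 / 2 by norm_num, rpow_add (by positivity), rpow_one,
    ← sqrt_eq_rpow, sqrt_mul zero_le_four, show √4 = 2 by norm_num]
  ring

lemma L_nonneg (a : ℝ) (z : E3) : 0 ≤ L a z := by
  unfold L
  positivity

@[fun_prop]
lemma measurable_L (a : ℝ) : Measurable (L a) := by
  unfold L
  fun_prop

lemma ofReal_L {a : ℝ} (ha : 0 < a) {z : E3} (hz : z ≠ 0) :
    ENNReal.ofReal (L a z) =
      ENNReal.ofReal (4 * π) * heatMixture (gammaMeasure 1 (a⁻¹ ^ 2)) z := by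
  have mixture := heatMixture_gammaMeasure_finrank_sub_one_div_two (V := E3) (by simp)
    (inv_pos.2 ha) hz
  simp only [finrank_euclideanSpace_fin, Nat.cast_ofNat] at mixture
  rw [show (3 - 1 : ℝ) = 2 by norm_num, div_self two_ne_zero, Gamma_one, rpow_two,
    four_pi_rpow_three_halves, inv_mul_eq_div, ← neg_div] at mixture
  rw [mixture, ← ENNReal.ofReal_mul (by positivity), L]
  congr 1
  field_simp
  ring

lemma heatMixture_gammaMeasure_two {a : ℝ} (ha : 0 < a) (x : E3) :
    heatMixture (gammaMeasure 2 (a⁻¹ ^ 2)) x =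
      ENNReal.ofReal (exp (-‖x‖ / a) / (8 * π * a ^ 3)) := by
  have mixture := heatMixture_gammaMeasure_finrank_add_one_div_two (V := E3) (inv_pos.2 ha) x
  simp only [finrank_euclideanSpace_fin, Nat.cast_ofNat] at mixture
  rw [show ((3 + 1) / 2 : ℝ) = 2 by norm_num, Gamma_two, four_pi_rpow_three_halves,
    inv_mul_eq_div, ← neg_div] at mixture
  rw [mixture]
  congr 1
  field_simp

lemma lintegral_ofReal_L_sub_mul_ofReal_L {a : ℝ} (ha : 0 < a) (x : E3) :
    ∫⁻ y, ENNReal.ofReal (L a (x - y)) * ENNReal.ofReal (L a y) =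
      ENNReal.ofReal (2 * π / a ^ 3 * exp (-‖x‖ / a)) := by
  have conv_exponential : gammaMeasure 1 (a⁻¹ ^ 2) ∗ gammaMeasure 1 (a⁻¹ ^ 2) =
      gammaMeasure 2 (a⁻¹ ^ 2) := by
    rw [gammaMeasure_conv_gammaMeasure one_pos one_pos (by positivity), one_add_one_eq_two]
  have : IsProbabilityMeasure (gammaMeasure 1 (a⁻¹ ^ 2)) :=
    isProbabilityMeasure_gammaMeasure one_pos (by positivity)
  set μ := gammaMeasure 1 (a⁻¹ ^ 2)
  calc ∫⁻ y, ENNReal.ofReal (L a (x - y)) * ENNReal.ofReal (L a y)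
    _ = ∫⁻ y, ENNReal.ofReal (4 * π) ^ 2 * (heatMixture μ y * heatMixture μ (-y + x)) := by
        refine lintegral_congr_ae ?_
        filter_upwards [Measure.ae_ne volume 0, Measure.ae_ne volume x] with y hy hyx
        rw [ofReal_L ha hy, ofReal_L ha (sub_ne_zero.2 hyx.symm), neg_add_eq_sub]
        ring
    _ = ENNReal.ofReal (4 * π) ^ 2 * (heatMixture μ ⋆ₗ heatMixture μ) x :=
        lintegral_const_mul _ (by fun_prop)
    _ = ENNReal.ofReal (4 * π) ^ 2 * ENNReal.ofReal (exp (-‖x‖ / a) / (8 * π * a ^ 3)) := by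
        rw [heatMixture_lconvolution_heatMixture (ae_pos_gammaMeasure _ _)
          (ae_pos_gammaMeasure _ _), conv_exponential, heatMixture_gammaMeasure_two ha]
    _ = ENNReal.ofReal (2 * π / a ^ 3 * exp (-‖x‖ / a)) := by
        rw [← ENNReal.ofReal_pow (by positivity), ← ENNReal.ofReal_mul (by positivity)]
        congr 1
        field_simp
        norm_num

end ThreeDimensional

/-- The convolution square of `L_a = -ΔK_a`: for every `x ∈ ℝ³`,
`∫ L_a(x - y) L_a(y) dy = (2π/a³) e^{-|x|/a}`. -/
theorem L_convolution_square (a : ℝ) (ha : 0 < a) (x : E3) :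
    ∫ y : E3, L a (x - y) * L a y = (2 * π / a ^ 3) * Real.exp (-‖x‖ / a) := by
  rw [integral_eq_lintegral_of_nonneg_ae
    (.of_forall fun y ↦ mul_nonneg (L_nonneg a (x - y)) (L_nonneg a y)) (by fun_prop)]
  simp_rw [ENNReal.ofReal_mul (L_nonneg a _)]
  rw [lintegral_ofReal_L_sub_mul_ofReal_L ha, ENNReal.toReal_ofReal (by positivity)]
end
end
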